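/- (Deterministic core of the upper bound on splitting times, Lemma A.2.) Let p ∈ [1,2], ε ∈ (0,1), and let j ≥ 0 be an integer with ε^p · 2^j ≤ 2^{10}. Let u be a stream of length m and let l, r, n be integers with 1 ≤ l ≤ r−n ≤ r ≤ m, W = [r−n,r], W' = [l,r], and F_p^{W'} ≤ 2·F_p^{W}. Let f be an interval estimator such that for all [a,b] ⊆ W', (1/2)·ℓ_p^{(a,b)} − (ε/2^{30})·ℓ_p^{W} ≤ f^{(a,b)} ≤ (3/2)·ℓ_p^{(a,b)} + (ε/2^{30})·ℓ_p^{W}. If l ≤ t_k < t_{k+1} ≤ t ≤ r and f^{(t_k, t_{k+1})} ≤ 2^{(−j−14)/p} · f^{(t_k, t)}, then F_p^{(t_k, t_{k+1})} ≤ 2^{−j−7} · F_p^{W}. -/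

import Mathlib

/-!
Write `A`, `B`, `L` for the `ℓ_p` norms of `[t_k, t_{k+1}]`, `[t_k, t]` and `W`, `δ = ε / 2^30`,
`c = 2^{(-j-14)/p}` and `d = 2^{(-j-7)/p}`. The claim is the `p`-th power of `A ≤ d L`.
Monotonicity of `F_p` under enlarging the interval and `F_p^{W'} ≤ 2 F_p^W` give
`B ≤ 2^{1/p} L`, so the estimator bounds yield
`A ≤ 2 c ((3/2) 2^{1/p} L + δ L) + 2 δ L`.
Here `c = d y` with `y = 2^{-7/p}`, and `p ≤ 2` makes both `y` and `y 2^{1/p} = 2^{-6/p}` at most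
`1/8`, while `ε^p 2^j ≤ 2^10` gives `ε ≤ 2^17 d`. The right-hand side is then at most `d L`.
-/

/-- `freq u a b i` is the number of times universe item `i` occurs among the
stream elements `u a, …, u b` (the frequency vector entry `x^{(a,b)}_i`). -/
def freq (u : ℕ → ℕ) (a b i : ℕ) : ℕ :=
  ((Finset.Icc a b).filter (fun t => u t = i)).card

/-- `Fmom U u p a b = F_p^{(a,b)} = Σ_{i=1}^U (x^{(a,b)}_i)^p`. -/
noncomputable def Fmom (U : ℕ) (u : ℕ → ℕ) (p : ℝ) (a b : ℕ) : ℝ :=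
  ∑ i ∈ Finset.Icc 1 U, (freq u a b i : ℝ) ^ p

/-- `lpnorm U u p a b = ℓ_p^{(a,b)} = (F_p^{(a,b)})^{1/p}`. -/
noncomputable def lpnorm (U : ℕ) (u : ℕ → ℕ) (p : ℝ) (a b : ℕ) : ℝ :=
  (Fmom U u p a b) ^ (1 / p)

theorem Fmom_nonneg (U : ℕ) (u : ℕ → ℕ) (p : ℝ) (a b : ℕ) : 0 ≤ Fmom U u p a b :=
  Finset.sum_nonneg fun _ _ => by positivity

theorem Fmom_mono (U : ℕ) (u : ℕ → ℕ) {p : ℝ} (hp : 0 ≤ p) {a b a' b' : ℕ}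
    (ha : a' ≤ a) (hb : b ≤ b') : Fmom U u p a b ≤ Fmom U u p a' b' := by
  refine Finset.sum_le_sum fun i _ => Real.rpow_le_rpow (by positivity) ?_ hp
  exact_mod_cast Finset.card_le_card
    (Finset.filter_subset_filter _ (Finset.Icc_subset_Icc ha hb))

theorem lpnorm_nonneg (U : ℕ) (u : ℕ → ℕ) (p : ℝ) (a b : ℕ) : 0 ≤ lpnorm U u p a b :=
  Real.rpow_nonneg (Fmom_nonneg U u p a b) _

theorem lpnorm_rpow (U : ℕ) (u : ℕ → ℕ) {p : ℝ} (hp : p ≠ 0) (a b : ℕ) :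
    lpnorm U u p a b ^ p = Fmom U u p a b := by
  rw [lpnorm, ← Real.rpow_mul (Fmom_nonneg U u p a b), one_div_mul_cancel hp, Real.rpow_one]

/-- The accuracy `ε` is within a constant factor of the target ratio `2^{(-j-7)/p}`. -/
theorem eps_le {p ε : ℝ} (hp1 : 1 ≤ p) (hε : 0 ≤ ε) (j : ℕ)
    (hj : ε ^ p * 2 ^ j ≤ (2 : ℝ) ^ (10 : ℕ)) :
    ε ≤ 2 ^ 17 * (2 : ℝ) ^ ((-(j : ℝ) - 7) / p) := by
  have hp : 0 < p := by linarith
  rw [← Real.rpow_le_rpow_iff hε (by positivity) hp, Real.mul_rpow (by positivity) (by positivity),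
    ← Real.rpow_mul (by norm_num), div_mul_cancel₀ _ hp.ne']
  have h1 : (2 : ℝ) ^ 17 ≤ ((2 : ℝ) ^ 17) ^ p := Real.self_le_rpow_of_one_le (by norm_num) hp1
  have h2 : (2 : ℝ) ^ (-(j : ℝ) - 7) = (2 ^ j)⁻¹ * (2 ^ 7)⁻¹ := by
    rw [sub_eq_add_neg, Real.rpow_add (by norm_num), Real.rpow_neg (by norm_num),
      Real.rpow_neg (by norm_num), Real.rpow_natCast]
    norm_num
  calc ε ^ p ≤ 2 ^ 10 * (2 ^ j)⁻¹ := by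
        rw [← div_eq_mul_inv, le_div_iff₀ (by positivity)]; exact hj
    _ = 2 ^ 17 * (2 : ℝ) ^ (-(j : ℝ) - 7) := by rw [h2]; ring
    _ ≤ _ := by gcongr

theorem two_rpow_neg_le {p s : ℝ} (hp : 0 < p) (hp2 : p ≤ 2) (hs : 6 ≤ s) :
    (2 : ℝ) ^ (-s / p) ≤ 1 / 8 := by
  calc (2 : ℝ) ^ (-s / p) ≤ 2 ^ (-3 : ℝ) := by
        apply Real.rpow_le_rpow_of_exponent_le (by norm_num)
        rw [div_le_iff₀ hp]; linarith
    _ = 1 / 8 := by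
        rw [Real.rpow_neg (by norm_num)]; norm_num

/-- Deterministic core of the upper bound on splitting times (Lemma A.2):
if the Strong-Estimator-type estimate of `[t_k, t_{k+1}]` is at most
`2^{(-j-14)/p}` times the estimate of `[t_k, t]`, then
`F_p^{(t_k, t_{k+1})} ≤ 2^{-j-7}·F_p^W`. -/
theorem splitting_times_upper_bound
    (m U : ℕ) (u : ℕ → ℕ) (hu : ∀ t ∈ Finset.Icc 1 m, u t ∈ Finset.Icc 1 U)
    (p : ℝ) (hp1 : 1 ≤ p) (hp2 : p ≤ 2)
    (ε : ℝ) (hε : ε ∈ Set.Ioo (0 : ℝ) 1)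
    (j : ℕ) (hj : ε ^ p * 2 ^ j ≤ (2 : ℝ) ^ (10 : ℕ))
    (l r n : ℕ) (hl : 1 ≤ l) (hlr : l ≤ r - n) (hrn : r - n ≤ r) (hrm : r ≤ m)
    (hW' : Fmom U u p l r ≤ 2 * Fmom U u p (r - n) r)
    (f : ℕ → ℕ → ℝ)
    (hf : ∀ a b : ℕ, l ≤ a → a ≤ b → b ≤ r →
      (1 / 2 : ℝ) * lpnorm U u p a b - ε / 2 ^ 30 * lpnorm U u p (r - n) r ≤ f a b ∧
      f a b ≤ (3 / 2 : ℝ) * lpnorm U u p a b + ε / 2 ^ 30 * lpnorm U u p (r - n) r)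
    (tk tk1 t : ℕ)
    (htk : l ≤ tk) (htk1 : tk < tk1) (ht : tk1 ≤ t) (htr : t ≤ r)
    (hsmall : f tk tk1 ≤ (2 : ℝ) ^ ((-(j : ℝ) - 14) / p) * f tk t) :
    Fmom U u p tk tk1 ≤ (2 : ℝ) ^ (-(j : ℝ) - 7) * Fmom U u p (r - n) r := by
  have hp : 0 < p := by linarith
  obtain ⟨hε0, hε1⟩ := hε
  have hL := lpnorm_nonneg U u p (r - n) r
  have hA := lpnorm_nonneg U u p tk tk1
  have hB : lpnorm U u p tk t ≤ (2 : ℝ) ^ (1 / p) * lpnorm U u p (r - n) r := by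
    unfold lpnorm
    rw [← Real.mul_rpow (by norm_num) (Fmom_nonneg U u p _ _)]
    exact Real.rpow_le_rpow (Fmom_nonneg U u p _ _)
      ((Fmom_mono U u hp.le htk htr).trans hW') (by positivity)
  have h1 := (hf tk tk1 htk htk1.le (ht.trans htr)).1
  have h2 := (hf tk t htk (htk1.le.trans ht) htr).2
  have hεd := eps_le hp1 hε0.le j hj
  have hc : (2 : ℝ) ^ ((-(j : ℝ) - 14) / p) = 2 ^ ((-(j : ℝ) - 7) / p) * 2 ^ (-7 / p) := by
    rw [← Real.rpow_add (by norm_num)]; congr 1; ring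
  have hyx : (2 : ℝ) ^ (-7 / p) * 2 ^ (1 / p) ≤ 1 / 8 := by
    rw [← Real.rpow_add (by norm_num), ← add_div, show (-7 + 1 : ℝ) = -6 by norm_num]
    exact two_rpow_neg_le hp hp2 le_rfl
  have hy : (2 : ℝ) ^ (-7 / p) ≤ 1 / 8 := two_rpow_neg_le hp hp2 (by norm_num)
  have hy0 : (0 : ℝ) < 2 ^ (-7 / p) := by positivity
  have hd0 : (0 : ℝ) < 2 ^ ((-(j : ℝ) - 7) / p) := by positivity
  have key : lpnorm U u p tk tk1 ≤
      (2 : ℝ) ^ ((-(j : ℝ) - 7) / p) * lpnorm U u p (r - n) r := by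
    rw [hc] at hsmall
    generalize (2 : ℝ) ^ (-7 / p) = y at *
    generalize (2 : ℝ) ^ ((-(j : ℝ) - 7) / p) = d at *
    generalize (2 : ℝ) ^ (1 / p) = x at *
    generalize lpnorm U u p (r - n) r = L at *
    generalize lpnorm U u p tk tk1 = A at *
    generalize lpnorm U u p tk t = B at *
    have e1 : y * f tk t ≤ 1 / 4 * L := by
      calc y * f tk t ≤ y * (3 / 2 * (x * L) + ε / 2 ^ 30 * L) := by gcongr; linarith
        _ = 3 / 2 * ((y * x) * L) + y * (ε / 2 ^ 30) * L := by ring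
        _ ≤ 3 / 2 * (1 / 8 * L) + 1 / 8 * (1 / 2 ^ 30) * L := by gcongr
        _ ≤ 1 / 4 * L := by nlinarith
    have e2 : d * y * f tk t ≤ d * (1 / 4 * L) := by
      rw [mul_assoc]; gcongr
    have e3 : ε * L ≤ 2 ^ 17 * d * L := by gcongr
    have e4 : 0 ≤ d * L := by positivity
    linarith
  have := Real.rpow_le_rpow hA key hp.le
  rwa [Real.mul_rpow hd0.le hL, lpnorm_rpow U u hp.ne', lpnorm_rpow U u hp.ne',
    ← Real.rpow_mul (by norm_num), div_mul_cancel₀ _ hp.ne'] at this
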